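/- For every RAI instance, every T > 0 and every ξ ∈ (0,1/2): if there exists a feasible schedule σ with makespan at most T, then the 0/1 assignment x_{ij} = 1 if σ(j) = i and x_{ij} = 0 otherwise satisfies all the LP constraints (1)–(5) for target T; i.e., the LP is a relaxation of the problem of deciding whether a schedule with makespan at most T exists. -/

import Mathlib

/-!
Every machine has load at most `T`, so the jobs placed on a machine have total size at most `T`.
Two jobs of size more than `T / 2` therefore never share a machine, so each machine gets at most one
large or huge job.

For the bound on huge jobs, fix machines `M(ℓ,r)`. By feasibility, every small job of `J(ℓ,r)` is processed there,
and the `k` huge jobs processed there are disjoint from the small ones. Together they use at most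
the total load `T · |M(ℓ,r)|`, hence `k (1/2+ξ)T + p(S(ℓ,r)) ≤ T · |M(ℓ,r)|`; since `k` is an
integer, the floor may be taken after dividing by `(1/2+ξ)T`.
-/

noncomputable section

open Finset

/-- An RAI (restricted assignment with interval restrictions) instance:
machines `0,…,m-1` (with `m ≥ 1`), jobs `0,…,n-1`, positive real sizes,
and for each job an interval `[lo j, hi j]` of eligible machines. -/
structure RAI where
  m : ℕ
  hm : 0 < m
  n : ℕ
  p : Fin n → ℝ
  hp : ∀ j, 0 < p j
  lo : Fin n → Fin m
  hi : Fin n → Fin m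
  hle : ∀ j, (lo j : ℕ) ≤ (hi j : ℕ)

namespace RAI

/-- Job `j` is eligible on machine `i`. -/
def eligible (I : RAI) (j : Fin I.n) (i : Fin I.m) : Prop :=
  (I.lo j : ℕ) ≤ (i : ℕ) ∧ (i : ℕ) ≤ (I.hi j : ℕ)

/-- A schedule is feasible if every job is assigned to an eligible machine. -/
def feasible (I : RAI) (σ : Fin I.n → Fin I.m) : Prop :=
  ∀ j, I.eligible j (σ j)

/-- Load of machine `i` under schedule `σ`. -/
def load (I : RAI) (σ : Fin I.n → Fin I.m) (i : Fin I.m) : ℝ :=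
  ∑ j ∈ Finset.univ.filter (fun j => σ j = i), I.p j

/-- Makespan: maximum machine load. -/
def makespan (I : RAI) (σ : Fin I.n → Fin I.m) : ℝ :=
  Finset.univ.sup' (Finset.univ_nonempty_iff.mpr ⟨⟨0, I.hm⟩⟩) (I.load σ)

/-- `J(ℓ,r)`: jobs whose eligibility interval is contained in `{ℓ,…,r}`. -/
def intervalJobs (I : RAI) (ℓ r : ℕ) : Finset (Fin I.n) :=
  Finset.univ.filter (fun j => ℓ ≤ (I.lo j : ℕ) ∧ (I.hi j : ℕ) ≤ r)

/-- `M(ℓ,r)`: machines in `{ℓ,…,r}`. -/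
def machInterval (I : RAI) (ℓ r : ℕ) : Finset (Fin I.m) :=
  Finset.univ.filter (fun i => ℓ ≤ (i : ℕ) ∧ (i : ℕ) ≤ r)

end RAI

namespace RAI

/-- Small jobs: `p_j ≤ T/2`. -/
def smallJobs (I : RAI) (T : ℝ) : Finset (Fin I.n) :=
  Finset.univ.filter (fun j => I.p j ≤ T / 2)

/-- Large or huge jobs: `p_j > T/2`. -/
def bigJobs (I : RAI) (T : ℝ) : Finset (Fin I.n) :=
  Finset.univ.filter (fun j => T / 2 < I.p j)

/-- Huge jobs: `p_j > (1/2 + ξ)T`. -/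
def hugeJobs (I : RAI) (T ξ : ℝ) : Finset (Fin I.n) :=
  Finset.univ.filter (fun j => (1 / 2 + ξ) * T < I.p j)

/-- The LP for target `T` with parameter `ξ`: constraints (1)–(5). -/
def LPfeasible (I : RAI) (T ξ : ℝ) (x : Fin I.m → Fin I.n → ℝ) : Prop :=
  (∀ i j, 0 ≤ x i j ∧ x i j ≤ 1) ∧
  (∀ j, ∑ i, x i j = 1) ∧
  (∀ i, ∑ j, I.p j * x i j ≤ T) ∧
  (∀ i j, ¬ I.eligible j i → x i j = 0) ∧
  (∀ i, ∑ j ∈ I.bigJobs T, x i j ≤ 1) ∧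
  (∀ ℓ r : Fin I.m, (ℓ : ℕ) ≤ (r : ℕ) →
    ∑ i ∈ I.machInterval (ℓ : ℕ) (r : ℕ), ∑ j ∈ I.hugeJobs T ξ, x i j ≤
      (⌊(T * ((I.machInterval (ℓ : ℕ) (r : ℕ)).card : ℝ) -
          ∑ j ∈ I.smallJobs T ∩ I.intervalJobs (ℓ : ℕ) (r : ℕ), I.p j) /
        ((1 / 2 + ξ) * T)⌋ : ℝ))

end RAI

theorem RAI.load_le (I : RAI) {T : ℝ} {σ : Fin I.n → Fin I.m} (hmk : I.makespan σ ≤ T)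
    (i : Fin I.m) : I.load σ i ≤ T :=
  (Finset.le_sup' (I.load σ) (Finset.mem_univ i)).trans hmk

theorem RAI.card_big_le_one (I : RAI) {T : ℝ} {σ : Fin I.n → Fin I.m}
    (hmk : I.makespan σ ≤ T) (i : Fin I.m) :
    ((I.bigJobs T).filter (fun j => σ j = i)).card ≤ 1 := by
  by_contra! hcard
  obtain ⟨a, ha, b, hb, hab⟩ := Finset.one_lt_card.mp hcard
  simp only [RAI.bigJobs, Finset.mem_filter, Finset.mem_univ, true_and] at ha hb
  have hsub : ({a, b} : Finset (Fin I.n)) ⊆ Finset.univ.filter (fun j => σ j = i) := by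
    intro j hj
    simp only [Finset.mem_insert, Finset.mem_singleton] at hj
    rcases hj with rfl | rfl <;> simp [ha.2, hb.2]
  have h := Finset.sum_le_sum_of_subset_of_nonneg (f := I.p) hsub (fun j _ _ => (I.hp j).le)
  rw [Finset.sum_pair hab] at h
  have hload : ∑ j ∈ Finset.univ.filter (fun j => σ j = i), I.p j ≤ T := I.load_le hmk i
  linarith [ha.1, hb.1]

theorem RAI.sum_mapsTo_le (I : RAI) {T : ℝ} {σ : Fin I.n → Fin I.m} (hmk : I.makespan σ ≤ T)
    (A : Finset (Fin I.m)) :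
    ∑ j ∈ Finset.univ.filter (fun j => σ j ∈ A), I.p j ≤ T * (A.card : ℝ) := by
  have hfib : ∑ j ∈ Finset.univ.filter (fun j => σ j ∈ A), I.p j = ∑ i ∈ A, I.load σ i := by
    rw [← Finset.sum_fiberwise_of_maps_to (s := Finset.univ.filter (fun j => σ j ∈ A)) (t := A)
      (g := σ) (by simp)]
    refine Finset.sum_congr rfl fun i hi => Finset.sum_congr ?_ fun _ _ => rfl
    ext j
    simp only [Finset.mem_filter, Finset.mem_univ, true_and]
    exact ⟨fun h => h.2, fun h => ⟨h ▸ hi, h⟩⟩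
  rw [hfib]
  calc ∑ i ∈ A, I.load σ i ≤ ∑ _i ∈ A, T := Finset.sum_le_sum fun i _ => I.load_le hmk i
    _ = T * (A.card : ℝ) := by rw [Finset.sum_const, nsmul_eq_mul, mul_comm]

/-- The volume bound behind the floor constraint: the huge jobs processed on `M(ℓ,r)` and the small jobs
of `J(ℓ,r)` together fit into the total capacity of `M(ℓ,r)`. -/
theorem RAI.huge_add_small_le (I : RAI) {T ξ : ℝ} (hT : 0 < T) (hξ : 0 < ξ)
    {σ : Fin I.n → Fin I.m} (hfeas : I.feasible σ) (hmk : I.makespan σ ≤ T) (ℓ r : ℕ) :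
    (((I.hugeJobs T ξ).filter (fun j => σ j ∈ I.machInterval ℓ r)).card : ℝ) *
        ((1 / 2 + ξ) * T) + ∑ j ∈ I.smallJobs T ∩ I.intervalJobs ℓ r, I.p j ≤
      T * ((I.machInterval ℓ r).card : ℝ) := by
  set A := I.machInterval ℓ r with hA
  set K := (I.hugeJobs T ξ).filter (fun j => σ j ∈ A) with hK
  set S := I.smallJobs T ∩ I.intervalJobs ℓ r with hS
  have hξT : 0 < ξ * T := mul_pos hξ hT
  have hdisj : Disjoint K S := by
    rw [Finset.disjoint_left]
    intro j hjK hjS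
    simp only [hK, hS, RAI.hugeJobs, RAI.smallJobs, Finset.mem_filter, Finset.mem_inter,
      Finset.mem_univ, true_and] at hjK hjS
    linarith [hjK.1, hjS.1]
  have hsub : K ∪ S ⊆ Finset.univ.filter (fun j => σ j ∈ A) := by
    intro j hj
    rw [Finset.mem_filter]
    refine ⟨Finset.mem_univ j, ?_⟩
    rcases Finset.mem_union.mp hj with hj | hj
    · exact (Finset.mem_filter.mp hj).2
    · simp only [hS, RAI.intervalJobs, Finset.mem_inter, Finset.mem_filter, Finset.mem_univ,
        true_and] at hj
      simp only [hA, RAI.machInterval, Finset.mem_filter, Finset.mem_univ, true_and]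
      exact ⟨hj.2.1.trans (hfeas j).1, (hfeas j).2.trans hj.2.2⟩
  have hsize : (K.card : ℝ) * ((1 / 2 + ξ) * T) ≤ ∑ j ∈ K, I.p j := by
    rw [← nsmul_eq_mul]
    refine Finset.card_nsmul_le_sum _ _ _ fun j hj => ?_
    simp only [hK, RAI.hugeJobs, Finset.mem_filter, Finset.mem_univ, true_and] at hj
    exact hj.1.le
  have hvol := Finset.sum_le_sum_of_subset_of_nonneg (f := I.p) hsub (fun j _ _ => (I.hp j).le)
  rw [Finset.sum_union hdisj] at hvol
  linarith [I.sum_mapsTo_le hmk A]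

/-- the LP is a relaxation: the 0/1 assignment induced by any feasible
schedule with makespan at most `T` satisfies all LP constraints (1)–(5). -/
theorem statement1 (I : RAI) (T ξ : ℝ) (hT : 0 < T) (hξ₁ : 0 < ξ) (hξ₂ : ξ < 1 / 2)
    (σ : Fin I.n → Fin I.m) (hfeas : I.feasible σ) (hmk : I.makespan σ ≤ T) :
    I.LPfeasible T ξ (fun i j => if σ j = i then 1 else 0) := by
  refine ⟨fun i j => ?_, fun j => ?_, fun i => ?_, fun i j hij => ?_, fun i => ?_,
    fun ℓ r _ => ?_⟩
  · dsimp only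
    split_ifs <;> norm_num
  · simp
  · have h := I.load_le hmk i
    rw [RAI.load, Finset.sum_filter] at h
    simpa only [mul_ite, mul_one, mul_zero] using h
  · refine if_neg fun h => hij ?_
    rw [← h]
    exact hfeas j
  · rw [Finset.sum_boole]
    exact_mod_cast I.card_big_le_one hmk i
  · have hcount : ∑ i ∈ I.machInterval (ℓ : ℕ) (r : ℕ), ∑ j ∈ I.hugeJobs T ξ,
        (if σ j = i then (1 : ℝ) else 0) =
        (((I.hugeJobs T ξ).filter
          (fun j => σ j ∈ I.machInterval (ℓ : ℕ) (r : ℕ))).card : ℝ) := by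
      rw [Finset.sum_comm, ← Finset.sum_boole]
      exact Finset.sum_congr rfl fun j _ => Finset.sum_ite_eq _ _ _
    have hpos : 0 < (1 / 2 + ξ) * T := by positivity
    rw [hcount, ← Int.cast_natCast, Int.cast_le, Int.le_floor, Int.cast_natCast, le_div_iff₀ hpos]
    linarith [I.huge_add_small_le hT hξ₁ hfeas hmk (ℓ : ℕ) (r : ℕ)]
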